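/- The word w contains no factor v having a kernel period q with |v|/q ≥ 35/34 + 9/(2·1966). -/

import Mathlib

/-- The four-letter alphabet `A₄ = {1,2,3,4}`; the value `k : Fin 4` represents letter `k+1`. -/
abbrev A4 := Fin 4

/-- The morphism `f` on letters: `f(1)=121, f(2)=123, f(3)=141, f(4)=142`
(letters `1,2,3,4` encoded as `0,1,2,3`). -/
def fm : A4 → List A4
  | 0 => [0, 1, 0]
  | 1 => [0, 1, 2]
  | 2 => [0, 3, 0]
  | 3 => [0, 3, 1]

/-- The morphism `f` extended to words by concatenation. -/
def fw (u : List A4) : List A4 := u.flatMap fm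

/-- The fixed point `w` of `f` starting with the letter `1`: since `|f^k(1)| = 3^k` and each
`f^k(1)` is a prefix of `f^(k+1)(1)`, the `n`-th letter of `w` is the `n`-th letter of
`f^(n+1)(1)`. -/
def w (n : ℕ) : A4 := ((fw^[n + 1]) [0]).getD n 0

/-- The finite word `t` occurs at position `i` in the infinite word `x`. -/
def OccursAt {α : Type*} (t : List α) (x : ℕ → α) (i : ℕ) : Prop :=
  t = (List.range t.length).map fun k => x (i + k)

/-- The finite word `v` is a factor of the infinite word `x`. -/
def FactorOf {α : Type*} (v : List α) (x : ℕ → α) : Prop :=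
  ∃ i, OccursAt v x i

/-- The finite word `v` has period `q ≥ 1`: `v(j) = v(j+q)` whenever `0 ≤ j < |v| - q`. -/
def HasPeriod {α : Type*} (v : List α) (q : ℕ) : Prop :=
  1 ≤ q ∧ ∀ j, j + q < v.length → v[j]? = v[j + q]?

/-- A word lies in `ker ψ` if each letter of `A₄` occurs in it a number of times
divisible by `4`. -/
def InKerPsi (u : List A4) : Prop := ∀ a : A4, 4 ∣ u.count a

/-- `q` is a kernel period of `v`: `1 ≤ q ≤ |v|`, `v` has period `q`, and the prefix of `v`
of length `q` lies in `ker ψ`. -/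
def KernelPeriod (v : List A4) (q : ℕ) : Prop :=
  q ≤ v.length ∧ HasPeriod v q ∧ InKerPsi (v.take q)

/-! ### The fixed point -/

theorem fw_length (L : List A4) : (fw L).length = 3 * L.length := by
  induction L with
  | nil => rfl
  | cons x L ih =>
    have h : (fm x).length = 3 := by fin_cases x <;> rfl
    have : fw (x :: L) = fm x ++ fw L := rfl
    rw [this, List.length_append, ih, h, List.length_cons]; ring

theorem fw_append (L K : List A4) : fw (L ++ K) = fw L ++ fw K := by
  simp [fw]

theorem fw_get (L : List A4) (n s : ℕ) (hs : s < 3) (hn : n < L.length) :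
    (fw L).getD (3 * n + s) 0 = (fm (L.getD n 0)).getD s 0 := by
  induction L generalizing n with
  | nil => simp at hn
  | cons x L ih =>
    have h : (fm x).length = 3 := by fin_cases x <;> rfl
    have e : fw (x :: L) = fm x ++ fw L := rfl
    rw [e]
    cases n with
    | zero =>
      rw [List.getD_append _ _ _ _ (by omega)]; simp
    | succ n =>
      rw [List.getD_append_right _ _ _ _ (by omega), h,
        show 3 * (n + 1) + s - 3 = 3 * n + s by omega, ih n (by simpa using hn)]
      simp

theorem iter_length (k : ℕ) (L : List A4) : (fw^[k] L).length = 3 ^ k * L.length := by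
  induction k with
  | zero => simp
  | succ k ih => rw [Function.iterate_succ_apply', fw_length, ih]; ring

theorem iter_append (k : ℕ) (L K : List A4) : fw^[k] (L ++ K) = fw^[k] L ++ fw^[k] K := by
  induction k with
  | zero => simp
  | succ k ih => simp only [Function.iterate_succ_apply', ih, fw_append]

theorem iter_step (k n : ℕ) (hn : n < 3 ^ k) :
    (fw^[k + 1] [0]).getD n 0 = (fw^[k] [0]).getD n 0 := by
  rw [Function.iterate_succ_apply]
  have : fw [0] = [0] ++ [1, 0] := rfl
  rw [this, iter_append, List.getD_append]
  rw [iter_length]; simpa using hn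

theorem iter_w (k n : ℕ) (hn : n < 3 ^ k) : (fw^[k] [0]).getD n 0 = w n := by
  have key : ∀ d k, n < 3 ^ k → (fw^[k + d] [0]).getD n 0 = (fw^[k] [0]).getD n 0 := by
    intro d
    induction d with
    | zero => intros; rfl
    | succ d ih =>
      intro k hk
      rw [← ih k hk, ← add_assoc, iter_step]
      exact lt_of_lt_of_le hk (Nat.pow_le_pow_right (by norm_num) (by omega))
  have h1 : n < 3 ^ (n + 1) :=
    lt_of_lt_of_le (Nat.lt_pow_self (by norm_num)) (Nat.pow_le_pow_right (by norm_num) (by omega))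
  unfold w
  rw [← key (n + 1) k hn, ← key k (n + 1) h1, add_comm]

theorem w_fm (n s : ℕ) (hs : s < 3) : w (3 * n + s) = (fm (w n)).getD s 0 := by
  have h1 : n < 3 ^ n := Nat.lt_pow_self (by norm_num)
  rw [← iter_w (n + 1) (3 * n + s) (by rw [pow_succ]; omega), Function.iterate_succ_apply',
    fw_get _ _ _ hs (by rw [iter_length]; simpa using h1), iter_w n n h1]

theorem w_iter (k n r : ℕ) (hr : r < 3 ^ k) :
    w (3 ^ k * n + r) = (fw^[k] [w n]).getD r 0 := by
  induction k generalizing r with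
  | zero => simp at hr; subst hr; simp
  | succ k ih =>
    have h : r / 3 < 3 ^ k := by rw [pow_succ] at hr; omega
    have e : 3 ^ (k + 1) * n + r = 3 * (3 ^ k * n + r / 3) + r % 3 := by
      have : r = 3 * (r / 3) + r % 3 := (Nat.div_add_mod r 3).symm
      rw [pow_succ]; nlinarith
    rw [e, w_fm _ _ (Nat.mod_lt _ (by norm_num)), ih _ h, Function.iterate_succ_apply']
    conv_rhs => rw [← Nat.div_add_mod r 3]
    rw [fw_get _ _ _ (Nat.mod_lt _ (by norm_num)) (by rw [iter_length]; simpa using h)]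

theorem w0 (n : ℕ) : w (3 * n) = 0 := by
  have := w_fm n 0 (by norm_num)
  rw [add_zero] at this
  rw [this]; generalize w n = x; revert x; decide

/-- All pairs of consecutive letters. -/
def prs : List (A4 × A4) :=
  [(0, 1), (0, 3), (1, 0), (1, 2), (3, 0), (3, 1), (0, 0), (2, 0)]

theorem w_pair (n : ℕ) : (w n, w (n + 1)) ∈ prs := by
  have hn := Nat.div_add_mod n 3
  set m := n / 3
  have h3 : n % 3 < 3 := Nat.mod_lt _ (by norm_num)
  have a0 := w_fm m 0 (by norm_num)
  have a1 := w_fm m 1 (by norm_num)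
  have a2 := w_fm m 2 (by norm_num)
  have a3 := w0 (m + 1)
  generalize w m = x at a0 a1 a2
  obtain h | h | h : n % 3 = 0 ∨ n % 3 = 1 ∨ n % 3 = 2 := by omega
  · rw [← hn, h, a0, add_assoc, a1]; clear a0 a1 a2; revert x; decide
  · rw [← hn, h, add_assoc, a1, a2]; clear a0 a1 a2; revert x; decide
  · rw [← hn, h, add_assoc, a2, show 3 * m + (2 + 1) = 3 * (m + 1) by ring, a3]; clear a0 a1 a2; revert x; decide

/-! ### Counting -/

/-- Number of occurrences of `a` in the prefix of length `n`. -/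
def cnt (a : A4) : ℕ → ℕ
  | 0 => 0
  | n + 1 => cnt a n + if w n = a then 1 else 0

theorem cnt_mono (a : A4) (m r : ℕ) : cnt a m ≤ cnt a (m + r) := by
  induction r with
  | zero => exact le_rfl
  | succ r ih => rw [← add_assoc, cnt]; omega

/-- Equality of Parikh vectors mod 4. -/
def PE (i j : ℕ) : Prop := ∀ a, cnt a i % 4 = cnt a j % 4

/-- Kernel repetition with period `q` and excess `e` at `i`. -/
def KRep (q i e : ℕ) : Prop := ∀ j, j ≤ e → PE (i + j) (i + j + q)

theorem PE_letter (i j : ℕ) (h : PE i j) (h' : PE (i + 1) (j + 1)) : w i = w j := by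
  have h1 := h (w i)
  have h2 := h' (w i)
  simp only [cnt, if_true] at h2
  by_contra hne
  rw [if_neg (fun h => hne h.symm)] at h2
  omega

theorem PE_succ (i j : ℕ) (h : PE i j) (h' : w i = w j) : PE (i + 1) (j + 1) := by
  intro a
  have h1 := h a
  simp only [cnt, h']
  omega

theorem cnt3 (n : ℕ) :
    cnt 0 (3 * n) = 2 * cnt 0 n + cnt 1 n + 2 * cnt 2 n + cnt 3 n ∧
    cnt 1 (3 * n) = cnt 0 n + cnt 1 n + cnt 3 n ∧
    cnt 2 (3 * n) = cnt 1 n ∧ cnt 3 (3 * n) = cnt 2 n + cnt 3 n := by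
  induction n with
  | zero => simp [cnt]
  | succ n ih =>
    have a0 := w_fm n 0 (by norm_num)
    have a1 := w_fm n 1 (by norm_num)
    have a2 := w_fm n 2 (by norm_num)
    rw [show 3 * (n + 1) = 3 * n + 0 + 1 + 1 + 1 by ring]
    simp only [cnt, add_zero, add_assoc] at a0 a1 a2 ⊢
    rw [a0, a1, a2]
    obtain ⟨i0, i1, i2, i3⟩ := ih
    rw [i0, i1, i2, i3]
    generalize w n = x
    fin_cases x <;> simp [fm] <;> omega

theorem PE_desub0 (i j : ℕ) (h : PE (3 * i) (3 * j)) : PE i j := by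
  have h0 := h 0
  have h1 := h 1
  have h2 := h 2
  have h3 := h 3
  obtain ⟨a0, a1, a2, a3⟩ := cnt3 i
  obtain ⟨b0, b1, b2, b3⟩ := cnt3 j
  have hs : (cnt 0 (3 * i) + 2 * cnt 1 (3 * i) + 2 * cnt 3 (3 * i) + cnt 2 (3 * i)) % 4 =
      (cnt 0 (3 * j) + 2 * cnt 1 (3 * j) + 2 * cnt 3 (3 * j) + cnt 2 (3 * j)) % 4 := by
    clear a0 a1 a2 a3 b0 b1 b2 b3
    omega
  rw [a0, b0, a1, b1, a2, b2, a3, b3] at hs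
  rw [a1, b1] at h1
  rw [a2, b2] at h2
  rw [a3, b3] at h3
  clear h0 a0 a1 a2 a3 b0 b1 b2 b3
  have e3 : cnt 3 i % 4 = cnt 3 j % 4 := by clear h1 h2 h3; omega
  have e2 : cnt 2 i % 4 = cnt 2 j % 4 := by clear hs h1 h2; omega
  have e0 : cnt 0 i % 4 = cnt 0 j % 4 := by clear hs h3 e2; omega
  intro a
  fin_cases a <;> assumption

theorem PE_desub1 (i j : ℕ) (h : PE (3 * i + 1) (3 * j + 1)) : PE i j := by
  apply PE_desub0
  intro a
  have := h a
  simp only [cnt, w0] at this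
  omega

theorem w1_ne (n : ℕ) : w (3 * n + 1) ≠ 0 := by
  rw [w_fm n 1 (by norm_num)]; generalize w n = x; revert x; decide

theorem Rep_letter {q i e : ℕ} (h : KRep q i e) (p : ℕ) (h1 : i ≤ p) (h2 : p < i + e) :
    w p = w (p + q) := by
  obtain ⟨j, rfl⟩ := Nat.exists_eq_add_of_le h1
  apply PE_letter _ _ (h j (by omega))
  have := h (j + 1) (by omega)
  rwa [show i + (j + 1) + q = i + j + q + 1 by ring] at this

theorem Rep_sync {q i e : ℕ} (h : KRep q i e) (he : 3 ≤ e) : q % 3 = 0 := by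
  obtain h0 | h1 | h2 : q % 3 = 0 ∨ q % 3 = 1 ∨ q % 3 = 2 := by omega
  · exact h0
  · have := Rep_letter h (3 * ((i + 2) / 3)) (by omega) (by omega)
    rw [w0, show 3 * ((i + 2) / 3) + q = 3 * ((i + 2) / 3 + q / 3) + 1 by omega] at this
    exact absurd this.symm (w1_ne _)
  · have := Rep_letter h (3 * ((i + 1) / 3) + 1) (by omega) (by omega)
    rw [show 3 * ((i + 1) / 3) + 1 + q = 3 * ((i + 1) / 3 + q / 3 + 1) by omega, w0] at this
    exact absurd this (w1_ne _)

theorem Rep_desub {q i e : ℕ} (h : KRep (3 * q) i e) (he : 3 ≤ e) :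
    ∃ i' e', KRep q i' e' ∧ e ≤ 3 * e' + 3 := by
  refine ⟨(i + 1) / 3, (i + e) / 3 - (i + 1) / 3, ?_, by omega⟩
  intro j hj
  set a := (i + 1) / 3 + j with ha
  by_cases hi : i ≤ 3 * a
  · apply PE_desub0
    have := h (3 * a - i) (by omega)
    rwa [show i + (3 * a - i) = 3 * a by omega, ← mul_add] at this
  · apply PE_desub1
    have := h (3 * a + 1 - i) (by omega)
    rwa [show i + (3 * a + 1 - i) = 3 * a + 1 by omega,
      show 3 * a + 1 + 3 * q = 3 * (a + q) + 1 by ring] at this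

/-! ### Finite checks -/

/-- Code of a Parikh vector mod 4. -/
def code (a b c d : ℕ) : ℕ := a % 4 + 4 * (b % 4) + 16 * (c % 4) + 64 * (d % 4)

/-- Codes of all prefixes. -/
def codes : List A4 → ℕ → ℕ → ℕ → ℕ → List ℕ
  | [], a, b, c, d => [code a b c d]
  | 0 :: L, a, b, c, d => code a b c d :: codes L (a + 1) b c d
  | 1 :: L, a, b, c, d => code a b c d :: codes L a (b + 1) c d
  | 2 :: L, a, b, c, d => code a b c d :: codes L a b (c + 1) d
  | 3 :: L, a, b, c, d => code a b c d :: codes L a b c (d + 1)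

theorem codes_zero (L : List A4) (a b c d : ℕ) :
    (codes L a b c d)[0]? = some (code a b c d) := by
  cases L with
  | nil => rfl
  | cons x L => fin_cases x <;> rfl

theorem codes_get (m0 : ℕ) (L : List A4) (m t : ℕ) (hm : m = m0 + t)
    (hL : ∀ j, j < L.length → L.getD j 0 = w (m + j)) (r : ℕ) (hr : r ≤ L.length) :
    (codes L (cnt 0 m - cnt 0 m0) (cnt 1 m - cnt 1 m0) (cnt 2 m - cnt 2 m0)
      (cnt 3 m - cnt 3 m0))[r]? =
    some (code (cnt 0 (m + r) - cnt 0 m0) (cnt 1 (m + r) - cnt 1 m0)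
      (cnt 2 (m + r) - cnt 2 m0) (cnt 3 (m + r) - cnt 3 m0)) := by
  induction L generalizing m r t with
  | nil => simp at hr; subst hr; rfl
  | cons x L ih =>
    cases r with
    | zero => rw [codes_zero]; rfl
    | succ r =>
      have := ih (m + 1) (t + 1) (by omega) (fun j hj => by
        have := hL (j + 1) (by simpa using hj)
        rw [show m + 1 + j = m + (j + 1) by ring, ← this]; simp) r (by simpa using hr)
      rw [show m + (r + 1) = m + 1 + r by ring, ← this]
      have hx : x = w m := by simpa using hL 0 (by simp)
      have c0 := cnt_mono 0 m0 t
      have c1 := cnt_mono 1 m0 t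
      have c2 := cnt_mono 2 m0 t
      have c3 := cnt_mono 3 m0 t
      rw [← hm] at c0 c1 c2 c3
      simp only [cnt, ← hx]
      clear hL this ih hm hx hr
      fin_cases x <;> simp [codes, Nat.sub_add_comm, *]

/-- Pack a list of bytes into one number. -/
def pack : List ℕ → ℕ
  | [] => 0
  | x :: X => x % 256 + pack X * 256

theorem pack_testBit (X : List ℕ) (r b : ℕ) (hb : b < 8) :
    (pack X).testBit (8 * r + b) = ((X[r]?.getD 0) % 256).testBit b := by
  induction X generalizing r with
  | nil => simp [pack]
  | cons x X ih =>
    have h : pack (x :: X) = 2 ^ 8 * pack X + x % 256 := by rw [pack]; ring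
    rw [h, Nat.testBit_two_pow_mul_add _ (Nat.mod_lt _ (by norm_num))]
    cases r with
    | zero => simp [hb]
    | succ r =>
      rw [if_neg (by omega), show 8 * (r + 1) + b - 8 = 8 * r + b by omega, ih]
      simp

/-- Bitwise or of `n + 1` shifted copies. -/
def orsh (s : ℕ) : ℕ → ℕ → ℕ
  | 0, D => D
  | n + 1, D => D ||| orsh s n (D >>> s)

theorem orsh_testBit (s n D p : ℕ) (h : ∀ j, j ≤ n → D.testBit (p + s * j) = false) :
    (orsh s n D).testBit p = false := by
  induction n generalizing D with
  | zero => simpa [orsh] using h 0 le_rfl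
  | succ n ih =>
    rw [orsh, Nat.testBit_or, ih, Bool.or_false]
    · simpa using h 0 (by omega)
    · intro j hj
      rw [Nat.testBit_shiftRight, ← h (j + 1) (by omega)]
      congr 1; ring

/-- The byte mask for 729 positions. -/
def mask : ℕ := (2 ^ 5832 - 1) / 255

theorem pack_ones (n : ℕ) : pack (List.replicate n 1) * 255 + 1 = 2 ^ (8 * n) := by
  induction n with
  | zero => rfl
  | succ n ih =>
    rw [List.replicate_succ, pack, mul_add, pow_add, ← ih]
    ring

theorem mask_eq : mask = pack (List.replicate 729 1) := by
  have h := pack_ones 729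
  rw [mask, show 5832 = 8 * 729 by norm_num, ← h, Nat.add_sub_cancel]
  exact Nat.mul_div_cancel _ (by norm_num)

/-- Evaluate a number before passing it on. -/
def force (k : ℕ → Bool) : ℕ → Bool
  | 0 => k 0
  | m + 1 => k (m + 1)

theorem force_eq (k : ℕ → Bool) (n : ℕ) : force k n = k n := by cases n <;> rfl

/-- No run of more than `e` consecutive equal bytes at distance `q`, starting below 729. -/
def norun (q e N M : ℕ) : Bool :=
  Nat.beq (orsh 8 e (orsh 1 7 (N ^^^ (N >>> (8 * q)))) &&& M) M

theorem norun_spec (q e r : ℕ) (X : List ℕ) (h : norun q e (pack X) mask = true) (hr : r < 729)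
    (hk : ∀ j, j ≤ e → X[r + j]? = X[q + (r + j)]?) : False := by
  have h1 := Nat.eq_of_beq_eq_true h
  have h2 := congrArg (fun n => n.testBit (8 * r + 0)) h1
  beta_reduce at h2
  have h3 : mask.testBit (8 * r + 0) = true := by
    rw [mask_eq, pack_testBit _ _ _ (by norm_num), List.getElem?_replicate, if_pos hr]
    rfl
  rw [Nat.testBit_and, h3, orsh_testBit] at h2
  · simp at h2
  · intro j hj
    apply orsh_testBit
    intro b hb
    rw [Nat.testBit_xor, Nat.testBit_shiftRight,
      show 8 * r + 0 + 8 * j + 1 * b = 8 * (r + j) + b by ring,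
      show 8 * q + (8 * (r + j) + b) = 8 * (q + (r + j)) + b by ring,
      pack_testBit _ _ _ (by omega), pack_testBit _ _ _ (by omega), hk j hj]
    simp

/-- The pairs (period, excess) that are excluded by direct inspection. -/
def tests : List (ℕ × ℕ) :=
  [(4, 0), (8, 0), (12, 0), (16, 0), (20, 0), (24, 0), (28, 0), (32, 0), (36, 0), (40, 1),
   (44, 1), (48, 1), (52, 1), (56, 1), (60, 1), (64, 1), (68, 2), (72, 1), (76, 1), (80, 2),
   (84, 2), (88, 2), (92, 2), (96, 2), (100, 2), (104, 3), (108, 2), (120, 3), (132, 3),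
   (204, 6), (312, 9), (612, 18)]

/-- Perform all tests on one packed code list. -/
def chk (N : ℕ) : Bool :=
  force (fun M => force (fun N => tests.all fun t => norun t.1 t.2 N M) N) mask

theorem chk_all : (prs.all fun p => chk (pack (codes (fw^[6] [p.1, p.2]) 0 0 0 0))) = true := by
  decide +kernel

theorem tests_bound : ∀ t ∈ tests, t.1 + t.2 ≤ 700 := by decide

theorem no_rep (q e i : ℕ) (ht : (q, e) ∈ tests) : ¬ KRep q i e := by
  intro h
  have hb := tests_bound _ ht
  simp only at hb
  have hi := Nat.div_add_mod i 729
  set n := i / 729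
  set r := i % 729
  have hr : r < 729 := Nat.mod_lt _ (by norm_num)
  have hc := List.all_eq_true.1 chk_all _ (w_pair n)
  simp only at hc
  rw [chk, force_eq, force_eq] at hc
  have hc2 := List.all_eq_true.1 hc _ ht
  simp only at hc2
  have hlen : (fw^[6] [w n, w (n + 1)]).length = 1458 := by rw [iter_length]; simp
  have hL : ∀ j, j < (fw^[6] [w n, w (n + 1)]).length →
      (fw^[6] [w n, w (n + 1)]).getD j 0 = w (729 * n + j) := by
    intro j hj
    rw [hlen] at hj
    have e : [w n, w (n + 1)] = [w n] ++ [w (n + 1)] := rfl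
    have l1 : (fw^[6] [w n]).length = 729 := by rw [iter_length]; simp
    rw [e, iter_append]
    by_cases hj' : j < 729
    · rw [List.getD_append _ _ _ _ (by omega)]
      exact (w_iter 6 n j (by norm_num; exact hj')).symm
    · rw [List.getD_append_right _ _ _ _ (by omega), l1]
      rw [show 729 * n + j = 3 ^ 6 * (n + 1) + (j - 729) by omega]
      exact (w_iter 6 (n + 1) (j - 729) (by norm_num; omega)).symm
  have hg := codes_get (729 * n) _ (729 * n) 0 rfl hL
  simp only [Nat.sub_self] at hg
  refine norun_spec _ _ r _ hc2 hr ?_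
  intro j hj
  rw [hg (r + j) (by omega), hg (q + (r + j)) (by omega)]
  have hp := h j hj
  rw [← hi] at hp
  have key : ∀ a, (cnt a (729 * n + (q + (r + j))) - cnt a (729 * n)) % 4 =
      (cnt a (729 * n + (r + j)) - cnt a (729 * n)) % 4 := by
    intro a
    have h1 := hp a
    have h2 := cnt_mono a (729 * n) (q + (r + j))
    have h3 := cnt_mono a (729 * n) (r + j)
    rw [show 729 * n + r + j + q = 729 * n + (q + (r + j)) by ring, add_assoc] at h1
    omega
  simp only [code, key]

theorem Rep_mono {q i e e' : ℕ} (h : KRep q i e) (he : e' ≤ e) : KRep q i e' :=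
  fun j hj => h j (hj.trans he)

theorem cnt_sum (n : ℕ) : cnt 0 n + cnt 1 n + cnt 2 n + cnt 3 n = n := by
  induction n with
  | zero => rfl
  | succ n ih =>
    simp only [cnt]
    generalize w n = x
    fin_cases x <;> simp <;> omega

theorem Rep_four {q i e : ℕ} (h : KRep q i e) : q % 4 = 0 := by
  have h := h 0 (by omega)
  have h0 := h 0
  have h1 := h 1
  have h2 := h 2
  have h3 := h 3
  have s1 := cnt_sum (i + 0)
  have s2 := cnt_sum (i + 0 + q)
  omega

theorem Rep_good (q : ℕ) : ∀ i e, 1 ≤ q → KRep q i e →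
    66844 * (2 * e + 3) < 4238 * q ∨ (q = 40 ∧ e = 0) ∨ (q = 44 ∧ e = 0) ∨ (q = 68 ∧ e = 1) ∨
      (q = 104 ∧ e = 2) ∨ (q = 204 ∧ e = 5) := by
  induction q using Nat.strong_induction_on with
  | _ q IH =>
    intro i e hq h
    by_cases he : 3 ≤ e
    · have h3 := Rep_sync h he
      obtain ⟨p, rfl⟩ : ∃ p, q = 3 * p := ⟨q / 3, by omega⟩
      obtain ⟨i', e', hr, hle⟩ := Rep_desub h he
      have n1 : 3 * p = 120 → ¬ 3 ≤ e := fun hp hh =>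
        no_rep 120 3 i (by decide) (hp ▸ Rep_mono h hh)
      have n2 : 3 * p = 132 → ¬ 3 ≤ e := fun hp hh =>
        no_rep 132 3 i (by decide) (hp ▸ Rep_mono h hh)
      have n3 : 3 * p = 204 → ¬ 6 ≤ e := fun hp hh =>
        no_rep 204 6 i (by decide) (hp ▸ Rep_mono h hh)
      have n4 : 3 * p = 312 → ¬ 9 ≤ e := fun hp hh =>
        no_rep 312 9 i (by decide) (hp ▸ Rep_mono h hh)
      have n5 : 3 * p = 612 → ¬ 18 ≤ e := fun hp hh =>
        no_rep 612 18 i (by decide) (hp ▸ Rep_mono h hh)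
      have := IH p (by omega) i' e' (by omega) hr
      omega
    · have h4 := Rep_four h
      by_cases hbig : 110 < q
      · left; omega
      · have hn : ∀ e', (q, e') ∈ tests → ¬ e' ≤ e := fun e' ht hh =>
          no_rep q e' i ht (Rep_mono h hh)
        obtain ⟨p, rfl⟩ : ∃ p, q = 4 * p := ⟨q / 4, by omega⟩
        have hp : p ≤ 27 := by omega
        have hp1 : 1 ≤ p := by omega
        have a0 := hn 0
        have a1 := hn 1
        have a2 := hn 2
        have a3 := hn 3
        clear hn IH h
        interval_cases p <;> simp [tests] at a0 a1 a2 a3 <;> omega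

/-! ### Conclusion -/

theorem cnt_range (a : A4) (i q : ℕ) :
    cnt a (i + q) = cnt a i + ((List.range q).map fun k => w (i + k)).count a := by
  induction q with
  | zero => simp
  | succ q ih =>
    rw [← add_assoc, cnt, ih, List.range_succ, List.map_append, List.count_append]
    simp [List.count_singleton, add_assoc]

/-- `w` contains no factor `v` having a kernel period `q` with `|v|/q ≥ 35/34 + 9/(2·1966)`. -/
theorem stmt1 : ¬ ∃ (v : List A4) (q : ℕ), FactorOf v w ∧ KernelPeriod v q ∧
    (v.length : ℚ) / q ≥ 35 / 34 + 9 / (2 * 1966) := by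
  rintro ⟨v, q, ⟨i, hv⟩, ⟨hqv, ⟨hq, hper⟩, hker⟩, hge⟩
  obtain ⟨e, he⟩ := Nat.exists_eq_add_of_le hqv
  unfold OccursAt at hv
  rw [he] at hv
  have hget : ∀ j, j < q + e → v[j]? = some (w (i + j)) := by
    intro j hj
    rw [hv]; simp [hj]
  have hrep : KRep q i e := by
    intro j
    induction j with
    | zero =>
      intro _ a
      have h1 := cnt_range a i q
      have h2 : v.take q = (List.range q).map fun k => w (i + k) := by
        rw [hv, ← List.map_take, List.take_range]; simp
      have h3 := hker a
      rw [h2] at h3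
      simp only [add_zero]
      omega
    | succ j ih =>
      intro hj
      have h1 := ih (by omega)
      have h2 := hper j (by omega)
      rw [hget j (by omega), hget (j + q) (by omega)] at h2
      have := PE_succ _ _ h1 (by rw [add_assoc]; simpa using h2)
      rwa [show i + j + q + 1 = i + (j + 1) + q by ring] at this
  have hgood := Rep_good q i e hq hrep
  have hq' : (0 : ℚ) < q := by exact_mod_cast hq
  rw [ge_iff_le, le_div_iff₀ hq', he] at hge
  have hfin : 2119 * q ≤ 66844 * e := by
    have : (2119 * q : ℚ) ≤ 66844 * e := by push_cast at hge; linarith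
    exact_mod_cast this
  omega
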